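/- (Continuity of the coupling correspondence) Let X, Y be Polish spaces. The correspondence Π : P(X) × P(Y) ⇉ P(X × Y) assigning to (μ,ν) the set of couplings Π(μ,ν) is both upper hemicontinuous and lower hemicontinuous with respect to the weak topologies, and has nonempty, convex, compact values. -/

import Mathlib

open MeasureTheory
open scoped ENNReal

variable {X Y : Type*}

/-- The set of couplings of `μ` and `ν`, as a set of probability measures on `X × Y`. -/
def couplings [MetricSpace X] [MeasurableSpace X] [MetricSpace Y] [MeasurableSpace Y]
    (μ : ProbabilityMeasure X) (ν : ProbabilityMeasure Y) :
    Set (ProbabilityMeasure (X × Y)) :=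
  {π | π.toMeasure.map Prod.fst = μ.toMeasure ∧ π.toMeasure.map Prod.snd = ν.toMeasure}

/-!
The couplings of `μ` and `ν` are the fibre over `(μ, ν)` of the map sending a measure on `X × Y` to
its pair of marginals. This map is proper, by Prokhorov's theorem in both directions, so its fibres
are compact and vary upper hemicontinuously. Lower hemicontinuity says that it is also open.
Discretise a coupling `π` of `(μ, ν)` along finite partitions of `X` and `Y` into sets with null
frontier. For marginals near `(μ, ν)`, a multiple `c < 1` of the discretised `π` has marginals
dominated by the discretised new ones; a product measure fills in the missing mass, and gluing in
the conditional laws on the cells lifts the result to a coupling of the new marginals. Any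
probability measure whose discretisation dominates `c` times that of `π` is weakly close to `π` once
`c` is near `1` and the partitions are fine, by the portmanteau theorem.
-/

open Filter ProbabilityTheory Set TopologicalSpace Topology

section Coupling

variable {α β ι κ : Type*} [MeasurableSpace α] [MeasurableSpace β]

lemma exists_fst_eq_and_snd_eq (μ : Measure α) (ν : Measure β) [IsFiniteMeasure μ]
    (h : μ univ = ν univ) :
    ∃ π : Measure (α × β), π.fst = μ ∧ π.snd = ν := by
  have : IsFiniteMeasure ν := ⟨h ▸ measure_lt_top μ univ⟩
  refine ⟨(μ univ)⁻¹ • μ.prod ν, ?_, ?_⟩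
  · rw [Measure.fst, Measure.map_smul, Measure.map_fst_prod, ← h, smul_smul]
    obtain rfl | hμ := eq_or_ne μ 0
    · simp
    · rw [ENNReal.inv_mul_cancel (by simpa using hμ) (measure_ne_top _ _), one_smul]
  · rw [Measure.snd, Measure.map_smul, Measure.map_snd_prod, h, smul_smul]
    obtain rfl | hν := eq_or_ne ν 0
    · simp
    · rw [ENNReal.inv_mul_cancel (by simpa using hν) (measure_ne_top _ _), one_smul]

lemma exists_fst_eq_and_snd_eq_of_le {μ : Measure α} {ν : Measure β} [IsFiniteMeasure μ]
    (h : μ univ = ν univ) {ρ : Measure (α × β)} (hμ : ρ.fst ≤ μ) (hν : ρ.snd ≤ ν) :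
    ∃ π : Measure (α × β), π.fst = μ ∧ π.snd = ν ∧ ρ ≤ π := by
  have : IsFiniteMeasure ν := ⟨h ▸ measure_lt_top μ univ⟩
  have : IsFiniteMeasure ρ.fst := isFiniteMeasure_of_le μ hμ
  have : IsFiniteMeasure ρ.snd := isFiniteMeasure_of_le ν hν
  have hmass : (μ - ρ.fst) univ = (ν - ρ.snd) univ := by
    rw [Measure.sub_apply .univ hμ, Measure.sub_apply .univ hν, Measure.fst_univ,
      Measure.snd_univ, h]
  obtain ⟨τ, hτ₁, hτ₂⟩ := exists_fst_eq_and_snd_eq _ _ hmass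
  refine ⟨τ + ρ, ?_, ?_, Measure.le_add_left le_rfl⟩
  · rw [Measure.fst_add, hτ₁, Measure.sub_add_cancel_of_le hμ]
  · rw [Measure.snd_add, hτ₂, Measure.sub_add_cancel_of_le hν]

variable [MeasurableSpace ι] [MeasurableSpace κ]

section Kernel

variable {σ : Measure (ι × κ)} (K : Kernel ι α) [IsSFiniteKernel K] (L : Kernel κ β)
  [IsSFiniteKernel L]

lemma fst_parallelComp_comp (hL : ∀ᵐ j ∂σ.snd, IsProbabilityMeasure (L j)) :
    ((K ∥ₖ L) ∘ₘ σ).fst = K ∘ₘ σ.fst := by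
  have hfst : (K ∥ₖ L).map Prod.fst =ᵐ[σ] K.prodMkRight κ := by
    filter_upwards [ae_of_ae_map measurable_snd.aemeasurable hL] with p hp
    rw [Kernel.map_apply _ measurable_fst, Kernel.parallelComp_apply, Measure.map_fst_prod,
      measure_univ, one_smul, Kernel.prodMkRight_apply]
  rw [Measure.fst, Measure.map_comp _ _ measurable_fst, Measure.comp_congr hfst,
    Kernel.prodMkRight, ← Kernel.comp_deterministic_eq_comap, ← Measure.comp_assoc,
    Measure.deterministic_comp_eq_map, Measure.fst]

lemma snd_parallelComp_comp (hK : ∀ᵐ i ∂σ.fst, IsProbabilityMeasure (K i)) :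
    ((K ∥ₖ L) ∘ₘ σ).snd = L ∘ₘ σ.snd := by
  have hsnd : (K ∥ₖ L).map Prod.snd =ᵐ[σ] L.prodMkLeft ι := by
    filter_upwards [ae_of_ae_map measurable_fst.aemeasurable hK] with p hp
    rw [Kernel.map_apply _ measurable_snd, Kernel.parallelComp_apply, Measure.map_snd_prod,
      measure_univ, one_smul, Kernel.prodMkLeft_apply]
  rw [Measure.snd, Measure.map_comp _ _ measurable_snd, Measure.comp_congr hsnd,
    Kernel.prodMkLeft, ← Kernel.comp_deterministic_eq_comap, ← Measure.comp_assoc,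
    Measure.deterministic_comp_eq_map, Measure.snd]

end Kernel

section Countable

variable [Countable ι] [MeasurableSingletonClass ι] [Countable κ] [MeasurableSingletonClass κ]

lemma exists_kernel_comp_map_eq (μ : Measure α) [IsFiniteMeasure μ] {a : α → ι}
    (ha : Measurable a) :
    ∃ K : Kernel ι α, IsFiniteKernel K ∧ K ∘ₘ μ.map a = μ ∧
      ∀ᵐ i ∂μ.map a, (K i).map a = Measure.dirac i := by
  have hfib (i : ι) : MeasurableSet (a ⁻¹' {i}) := ha (measurableSet_singleton i)
  refine ⟨.ofFunOfCountable fun i ↦ μ[|a ⁻¹' {i}],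
    ⟨1, ENNReal.one_lt_top, fun i ↦ show μ[|a ⁻¹' {i}] univ ≤ 1 from prob_le_one⟩, ?_, ?_⟩
  · ext E hE
    have hpart : ⋃ i, a ⁻¹' {i} ∩ E = E := by
      rw [← iUnion_inter, ← preimage_iUnion, iUnion_of_singleton, preimage_univ, univ_inter]
    calc
      _ = ∑' i, μ (a ⁻¹' {i}) * μ[E | a ⁻¹' {i}] := by
        rw [Measure.comp_eq_sum_of_countable, Measure.sum_apply _ hE]
        simp_rw [Measure.smul_apply, Measure.map_apply ha (measurableSet_singleton _)]
        rfl
      _ = ∑' i, μ (a ⁻¹' {i} ∩ E) := by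
        simp_rw [mul_comm (μ _), cond_mul_eq_inter (hfib _)]
      _ = μ E := by
        rw [← measure_iUnion _ fun i ↦ (hfib i).inter hE, hpart]
        exact (pairwise_disjoint_fiber a).mono fun _ _ h ↦
          h.mono inter_subset_left inter_subset_left
  · rw [ae_iff_of_countable]
    intro i hi
    rw [Measure.map_apply ha (measurableSet_singleton i)] at hi
    have := cond_isProbabilityMeasure hi
    change (μ[|a ⁻¹' {i}]).map a = _
    have hconst : a =ᵐ[μ[|a ⁻¹' {i}]] fun _ ↦ i := ae_cond_mem (hfib i)
    rw [Measure.map_congr hconst, Measure.map_const, measure_univ, one_smul]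

lemma exists_map_prodMap_eq (μ : Measure α) (ν : Measure β) [IsFiniteMeasure μ]
    [IsFiniteMeasure ν] {a : α → ι} (ha : Measurable a) {b : β → κ} (hb : Measurable b)
    {σ : Measure (ι × κ)} (hσ₁ : σ.fst = μ.map a) (hσ₂ : σ.snd = ν.map b) :
    ∃ π : Measure (α × β), π.fst = μ ∧ π.snd = ν ∧ π.map (Prod.map a b) = σ := by
  obtain ⟨K, _, hKμ, hKa⟩ := exists_kernel_comp_map_eq μ ha
  obtain ⟨L, _, hLν, hLb⟩ := exists_kernel_comp_map_eq ν hb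
  rw [← hσ₁] at hKμ hKa
  rw [← hσ₂] at hLν hLb
  have hK : ∀ᵐ i ∂σ.fst, IsProbabilityMeasure (K i) := hKa.mono fun i hi ↦
    (Measure.isProbabilityMeasure_map_iff ha.aemeasurable).1 (hi ▸ inferInstance)
  have hL : ∀ᵐ j ∂σ.snd, IsProbabilityMeasure (L j) := hLb.mono fun j hj ↦
    (Measure.isProbabilityMeasure_map_iff hb.aemeasurable).1 (hj ▸ inferInstance)
  refine ⟨(K ∥ₖ L) ∘ₘ σ, ?_, ?_, ?_⟩
  · rw [fst_parallelComp_comp K L hL, hKμ]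
  · rw [snd_parallelComp_comp K L hK, hLν]
  · have hid : ∀ᵐ p ∂σ, (K ∥ₖ L).map (Prod.map a b) p = Kernel.id p := by
      filter_upwards [ae_of_ae_map measurable_fst.aemeasurable hKa,
        ae_of_ae_map measurable_snd.aemeasurable hLb] with p hp₁ hp₂
      rw [Kernel.map_apply _ (ha.prodMap hb), Kernel.parallelComp_apply,
        ← Measure.map_prod_map _ _ ha hb, hp₁, hp₂, Measure.dirac_prod_dirac, Kernel.id_apply]
    rw [Measure.map_comp _ _ (ha.prodMap hb), Measure.comp_congr hid, Measure.id_comp]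

lemma exists_fst_eq_and_snd_eq_of_le_map {μ : Measure α} {ν : Measure β} [IsFiniteMeasure μ]
    (h : μ univ = ν univ) {a : α → ι} (ha : Measurable a) {b : β → κ} (hb : Measurable b)
    {ρ : Measure (ι × κ)} (hμ : ρ.fst ≤ μ.map a) (hν : ρ.snd ≤ ν.map b) :
    ∃ π : Measure (α × β), π.fst = μ ∧ π.snd = ν ∧ ρ ≤ π.map (Prod.map a b) := by
  have : IsFiniteMeasure ν := ⟨h ▸ measure_lt_top μ univ⟩
  have hmass : μ.map a univ = ν.map b univ := by
    rw [Measure.map_apply ha .univ, Measure.map_apply hb .univ, preimage_univ, preimage_univ, h]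
  obtain ⟨σ, hσ₁, hσ₂, hρσ⟩ := exists_fst_eq_and_snd_eq_of_le hmass hμ hν
  obtain ⟨π, hπ₁, hπ₂, hπσ⟩ := exists_map_prodMap_eq μ ν ha hb hσ₁ hσ₂
  exact ⟨π, hπ₁, hπ₂, hπσ ▸ hρσ⟩

end Countable

end Coupling

lemma measure_le_of_singleton_le {ι : Type*} [MeasurableSpace ι] [Countable ι]
    [MeasurableSingletonClass ι] {μ ν : Measure ι} (h : ∀ i, μ {i} ≤ ν {i}) : μ ≤ ν := by
  refine Measure.le_iff.2 fun s hs ↦ ?_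
  rw [← μ.tsum_indicator_apply_singleton s hs, ← ν.tsum_indicator_apply_singleton s hs]
  exact ENNReal.tsum_le_tsum fun i ↦ indicator_le_indicator (h i)

lemma frontier_iInter_subset {α κ : Type*} [TopologicalSpace α] [Finite κ] (A : κ → Set α) :
    frontier (⋂ k, A k) ⊆ ⋃ k, frontier (A k) := by
  intro x hx
  rw [frontier, interior_iInter_of_finite] at hx
  obtain ⟨k, hk⟩ := not_forall.1 fun h ↦ hx.2 (mem_iInter.2 h)
  exact mem_iUnion.2 ⟨k, closure_mono (iInter_subset A k) hx.1, hk⟩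

section Membership

variable {α κ : Type*}

/-- The map recording, for each point, which members of the family `A` contain it. Its fibres are
the atoms of the algebra of sets generated by `A`, so for finite `κ` it encodes a finite
partition. -/
def membership (A : κ → Set α) (x : α) : Set κ :=
  {k | x ∈ A k}

lemma measurable_membership [MeasurableSpace α] {A : κ → Set α} (hA : ∀ k, MeasurableSet (A k)) :
    Measurable (membership A) :=
  measurable_set_iff.2 fun k ↦ (hA k).mem

lemma measurableSet_comap_membership (A : κ → Set α) (k : κ) :
    MeasurableSet[MeasurableSpace.comap (membership A) inferInstance] (A k) :=
  ⟨{s | k ∈ s}, measurableSet_setOfPred.2 (measurable_set_mem k), rfl⟩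

lemma preimage_membership_singleton (A : κ → Set α) (s : Set κ) :
    membership A ⁻¹' {s} = ⋂ k, {x | x ∈ A k ↔ k ∈ s} := by
  ext x
  simp [membership, Set.ext_iff]

lemma null_frontier_preimage_membership_singleton [TopologicalSpace α] [MeasurableSpace α]
    [Finite κ] {μ : Measure α} {A : κ → Set α} (hA : ∀ k, μ (frontier (A k)) = 0) (s : Set κ) :
    μ (frontier (membership A ⁻¹' {s})) = 0 := by
  have hfrontier (k : κ) : frontier {x | x ∈ A k ↔ k ∈ s} = frontier (A k) := by
    by_cases hk : k ∈ s
    · simp only [hk, iff_true, ofPred_mem_eq]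
    · simp only [hk, iff_false]
      exact frontier_compl (A k)
  rw [preimage_membership_singleton]
  refine measure_mono_null (frontier_iInter_subset _) (measure_iUnion_null fun k ↦ ?_)
  rw [hfrontier, hA]

end Membership

section WeakConvergence

variable {Ω : Type*} [TopologicalSpace Ω] [MeasurableSpace Ω] [OpensMeasurableSpace Ω]

lemma eventually_smul_map_le [HasOuterApproxClosed Ω] {ι : Type*} [MeasurableSpace ι] [Finite ι]
    [MeasurableSingletonClass ι] {μ : ProbabilityMeasure Ω} {a : Ω → ι} (ha : Measurable a)
    (hfrontier : ∀ i, (μ : Measure Ω) (frontier (a ⁻¹' {i})) = 0) {c : ℝ≥0∞} (hc : c < 1) :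
    ∀ᶠ μ' : ProbabilityMeasure Ω in 𝓝 μ, c • (μ : Measure Ω).map a ≤ (μ' : Measure Ω).map a := by
  have hfib (i : ι) : ∀ᶠ μ' : ProbabilityMeasure Ω in 𝓝 μ,
      c * (μ : Measure Ω) (a ⁻¹' {i}) ≤ (μ' : Measure Ω) (a ⁻¹' {i}) := by
    obtain h0 | h0 := eq_or_ne ((μ : Measure Ω) (a ⁻¹' {i})) 0
    · exact .of_forall fun μ' ↦ by simp [h0]
    · have hlt : c * (μ : Measure Ω) (a ⁻¹' {i}) < (μ : Measure Ω) (a ⁻¹' {i}) := by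
        simpa using ENNReal.mul_lt_mul_left h0 (measure_ne_top _ _) hc
      exact ((ProbabilityMeasure.tendsto_measure_of_null_frontier_of_tendsto' tendsto_id
        (hfrontier i)).eventually_const_lt hlt).mono fun _ ↦ le_of_lt
  filter_upwards [eventually_all.2 hfib] with μ' hμ'
  refine measure_le_of_singleton_le fun i ↦ ?_
  simpa [Measure.map_apply ha (measurableSet_singleton i)] using hμ' i

lemma exists_seq_isTopologicalBasis_null_frontier [PseudoMetrizableSpace Ω]
    [SecondCountableTopology Ω] (μ : Measure Ω) [SFinite μ] :
    ∃ A : ℕ → Set Ω, IsTopologicalBasis (range A) ∧ ∀ k, μ (frontier (A k)) = 0 := by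
  let _ := pseudoMetrizableSpacePseudoMetric Ω
  have hbasis : IsTopologicalBasis {s : Set Ω | IsOpen s ∧ μ (frontier s) = 0} := by
    refine isTopologicalBasis_of_isOpen_of_nhds (fun s hs ↦ hs.1) fun x U hx hU ↦ ?_
    obtain ⟨ε, hε, hεU⟩ := Metric.isOpen_iff.1 hU x hx
    obtain ⟨r, ⟨hr, hrε⟩, hμr⟩ := exists_null_frontier_thickening μ {x} hε
    rw [Metric.thickening_singleton] at hμr
    exact ⟨Metric.ball x r, ⟨Metric.isOpen_ball, hμr⟩, Metric.mem_ball_self hr,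
      (Metric.ball_subset_ball hrε.le).trans hεU⟩
  obtain ⟨S, hS, hScount, hSbasis⟩ := hbasis.exists_countable
  obtain ⟨A, hA⟩ := (hScount.insert ∅).exists_eq_range (insert_nonempty _ _)
  refine ⟨A, hA ▸ hSbasis.insert_empty, fun k ↦ ?_⟩
  obtain hk | hk : A k ∈ insert ∅ S := hA ▸ mem_range_self k
  · rw [hk, frontier_empty, measure_empty]
  · exact (hS hk).2

variable [SecondCountableTopology Ω] {S : Set (Set Ω)} {π : ProbabilityMeasure Ω}

lemma tendsto_of_isTopologicalBasis_of_eventually_mul_le (hS : IsTopologicalBasis S) {γ : Type*}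
    {L : Filter γ} [L.IsCountablyGenerated] {πs : γ → ProbabilityMeasure Ω} {c : γ → ℝ≥0∞}
    (hc : Tendsto c L (𝓝 1))
    (h : ∀ T : Finset (Set Ω), ↑T ⊆ S → ∀ᶠ n in L,
      c n * (π : Measure Ω) (⋃ t ∈ T, t) ≤ (πs n : Measure Ω) (⋃ t ∈ T, t)) :
    Tendsto πs L (𝓝 π) := by
  refine tendsto_of_forall_isOpen_le_liminf' fun G hG ↦ ?_
  refine (le_liminf_iff).2 fun r hr ↦ ?_
  lift r to NNReal using hr.ne_top
  obtain ⟨T, hTS, hrT, hTG⟩ := π.exists_lt_measure_biUnion_of_isOpen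
    (fun U hU x hx ↦ by
      obtain ⟨s, hs, hxs, hsU⟩ := hS.exists_subset_of_mem_open hx hU
      exact ⟨s, hs, (hS.isOpen hs).mem_nhds hxs, hsU⟩) hG
    (r := r) (by simpa [← ProbabilityMeasure.ennreal_coeFn_eq_coeFn_toMeasure] using hr)
  have hlim : Tendsto (fun n ↦ c n * (π : Measure Ω) (⋃ t ∈ T, t)) L
      (𝓝 ((π : Measure Ω) (⋃ t ∈ T, t))) := by
    simpa using ENNReal.Tendsto.mul_const hc (.inr (measure_ne_top _ _))
  have hrT' : (r : ℝ≥0∞) < (π : Measure Ω) (⋃ t ∈ T, t) := by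
    simpa [← ProbabilityMeasure.ennreal_coeFn_eq_coeFn_toMeasure] using hrT
  filter_upwards [hlim.eventually_const_lt hrT', h T hTS] with n hn hle
  exact hn.trans_le (hle.trans (measure_mono hTG))

lemma exists_forall_smul_map_le_imp_mem (hS : IsTopologicalBasis S) {E : ℕ → Type*}
    [∀ n, MeasurableSpace (E n)] {q : ∀ n, Ω → E n} (hq : ∀ n, Measurable (q n))
    (hSq : ∀ s ∈ S, ∀ᶠ n in atTop, MeasurableSet[.comap (q n) inferInstance] s)
    {U : Set (ProbabilityMeasure Ω)} (hU : U ∈ 𝓝 π) :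
    ∃ n, ∃ c < (1 : ℝ≥0∞), ∀ π' : ProbabilityMeasure Ω,
      c • (π : Measure Ω).map (q n) ≤ (π' : Measure Ω).map (q n) → π' ∈ U := by
  by_contra! hcon
  obtain ⟨c, -, hc, hclim⟩ := exists_seq_strictMono_tendsto' (zero_lt_one (α := ℝ≥0∞))
  choose πs hle hπs using fun n ↦ hcon n (c n) (hc n).2
  have hlim : Tendsto πs atTop (𝓝 π) := by
    refine tendsto_of_isTopologicalBasis_of_eventually_mul_le hS hclim fun T hT ↦ ?_
    filter_upwards [(T.eventually_all (l := atTop)).2 fun t ht ↦ hSq t (hT ht)] with n hn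
    obtain ⟨F, hF, hFT⟩ : MeasurableSet[.comap (q n) inferInstance] (⋃ t ∈ T, t) :=
      T.measurableSet_biUnion hn
    simpa [← hFT, Measure.map_apply (hq n) hF] using hle n F
  obtain ⟨n, hn⟩ := (hlim.eventually_mem hU).exists
  exact hπs n hn

end WeakConvergence

section Marginals

/-- The pair of marginals of a probability measure on a product. The couplings of `μ` and `ν` form
its fibre over `(μ, ν)`. -/
noncomputable def marginals [MeasurableSpace X] [MeasurableSpace Y]
    (π : ProbabilityMeasure (X × Y)) : ProbabilityMeasure X × ProbabilityMeasure Y :=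
  (π.map measurable_fst.aemeasurable, π.map measurable_snd.aemeasurable)

lemma marginals_eq_iff [MeasurableSpace X] [MeasurableSpace Y] {π : ProbabilityMeasure (X × Y)}
    {p : ProbabilityMeasure X × ProbabilityMeasure Y} :
    marginals π = p ↔
      (π : Measure (X × Y)).fst = (p.1 : Measure X) ∧ (π : Measure (X × Y)).snd = p.2 := by
  rw [Prod.ext_iff]
  exact and_congr (Subtype.ext_iff (a1 := (marginals π).1))
    (Subtype.ext_iff (a1 := (marginals π).2))

lemma couplings_eq_preimage_marginals [MetricSpace X] [MeasurableSpace X] [MetricSpace Y]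
    [MeasurableSpace Y] (μ : ProbabilityMeasure X) (ν : ProbabilityMeasure Y) :
    couplings μ ν = marginals ⁻¹' {(μ, ν)} :=
  Set.ext fun π ↦ (marginals_eq_iff (π := π) (p := (μ, ν))).symm

variable [TopologicalSpace X] [MeasurableSpace X] [TopologicalSpace Y] [MeasurableSpace Y]

lemma continuous_marginals [BorelSpace X] [BorelSpace Y] [OpensMeasurableSpace (X × Y)] :
    Continuous (marginals (X := X) (Y := Y)) :=
  (ProbabilityMeasure.continuous_map continuous_fst).prodMk
    (ProbabilityMeasure.continuous_map continuous_snd)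

lemma isProperMap_marginals [PolishSpace X] [BorelSpace X] [PolishSpace Y] [BorelSpace Y] :
    IsProperMap (marginals (X := X) (Y := Y)) := by
  let _ := upgradeIsCompletelyMetrizable X
  let _ := upgradeIsCompletelyMetrizable Y
  refine isProperMap_iff_isCompact_preimage.2 ⟨continuous_marginals, fun K hK ↦ ?_⟩
  have htight₁ : IsTightMeasureSet {μ | ∃ m ∈ Prod.fst '' K, (m : Measure X) = μ} :=
    isTightMeasureSet_of_isCompact_closure (hK.image continuous_fst).closure
  have htight₂ : IsTightMeasureSet {ν | ∃ n ∈ Prod.snd '' K, (n : Measure Y) = ν} :=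
    isTightMeasureSet_of_isCompact_closure (hK.image continuous_snd).closure
  rw [← (hK.isClosed.preimage continuous_marginals).closure_eq]
  refine isCompact_closure_of_isTightMeasureSet (.prodMk (htight₁.subset ?_) (htight₂.subset ?_))
  · rintro _ ⟨_, ⟨π, hπ, rfl⟩, rfl⟩
    exact ⟨_, mem_image_of_mem _ hπ, rfl⟩
  · rintro _ ⟨_, ⟨π, hπ, rfl⟩, rfl⟩
    exact ⟨_, mem_image_of_mem _ hπ, rfl⟩

lemma eventually_exists_marginals_eq_and_smul_map_le [OpensMeasurableSpace X]
    [HasOuterApproxClosed X] [OpensMeasurableSpace Y] [HasOuterApproxClosed Y] {ι κ : Type*}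
    [Finite ι] [MeasurableSpace ι] [MeasurableSingletonClass ι]
    [Finite κ] [MeasurableSpace κ] [MeasurableSingletonClass κ]
    (π : ProbabilityMeasure (X × Y)) {a : X → ι} (ha : Measurable a) {b : Y → κ}
    (hb : Measurable b)
    (ha₀ : ∀ i, ((marginals π).1 : Measure X) (frontier (a ⁻¹' {i})) = 0)
    (hb₀ : ∀ j, ((marginals π).2 : Measure Y) (frontier (b ⁻¹' {j})) = 0)
    {c : ℝ≥0∞} (hc : c < 1) :
    ∀ᶠ p in 𝓝 (marginals π), ∃ π' : ProbabilityMeasure (X × Y), marginals π' = p ∧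
      c • (π : Measure (X × Y)).map (Prod.map a b) ≤
        (π' : Measure (X × Y)).map (Prod.map a b) := by
  filter_upwards [continuousAt_fst.eventually (eventually_smul_map_le ha ha₀ hc),
    continuousAt_snd.eventually (eventually_smul_map_le hb hb₀ hc)] with p hp₁ hp₂
  have hfst : ((π : Measure (X × Y)).map (Prod.map a b)).fst =
      ((marginals π).1 : Measure X).map a := by
    rw [Measure.fst, Measure.map_map measurable_fst (ha.prodMap hb)]
    exact (Measure.map_map ha measurable_fst).symm
  have hsnd : ((π : Measure (X × Y)).map (Prod.map a b)).snd =
      ((marginals π).2 : Measure Y).map b := by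
    rw [Measure.snd, Measure.map_map measurable_snd (ha.prodMap hb)]
    exact (Measure.map_map hb measurable_snd).symm
  obtain ⟨π', hπ'₁, hπ'₂, hle⟩ := exists_fst_eq_and_snd_eq_of_le_map
    (μ := (p.1 : Measure X)) (ν := (p.2 : Measure Y)) (by simp) ha hb
    (ρ := c • (π : Measure (X × Y)).map (Prod.map a b))
    (by rwa [Measure.fst, Measure.map_smul, ← Measure.fst, hfst])
    (by rwa [Measure.snd, Measure.map_smul, ← Measure.snd, hsnd])
  have : IsProbabilityMeasure π' := ⟨by rw [← Measure.fst_univ, hπ'₁, measure_univ]⟩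
  exact ⟨⟨π', this⟩, marginals_eq_iff.2 ⟨hπ'₁, hπ'₂⟩, hle⟩

lemma isOpenMap_marginals [PseudoMetrizableSpace X] [SecondCountableTopology X]
    [OpensMeasurableSpace X] [PseudoMetrizableSpace Y] [SecondCountableTopology Y]
    [OpensMeasurableSpace Y] : IsOpenMap (marginals (X := X) (Y := Y)) := by
  refine isOpenMap_iff_nhds_le.2 fun π V hV ↦ ?_
  obtain ⟨A, hA, hA₀⟩ := exists_seq_isTopologicalBasis_null_frontier ((marginals π).1 : Measure X)
  obtain ⟨B, hB, hB₀⟩ := exists_seq_isTopologicalBasis_null_frontier ((marginals π).2 : Measure Y)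
  let a (n : ℕ) : X → Set (Fin n) := membership fun k ↦ A k
  let b (n : ℕ) : Y → Set (Fin n) := membership fun k ↦ B k
  have ha (n : ℕ) : Measurable (a n) :=
    measurable_membership fun k ↦ (hA.isOpen (mem_range_self _)).measurableSet
  have hb (n : ℕ) : Measurable (b n) :=
    measurable_membership fun k ↦ (hB.isOpen (mem_range_self _)).measurableSet
  have hrect : ∀ s ∈ image2 (· ×ˢ ·) (range A) (range B), ∀ᶠ n in atTop,
      MeasurableSet[.comap (Prod.map (a n) (b n)) inferInstance] s := by
    rintro _ ⟨_, ⟨k, rfl⟩, _, ⟨l, rfl⟩, rfl⟩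
    filter_upwards [eventually_gt_atTop k, eventually_gt_atTop l] with n hk hl
    obtain ⟨s, hs, hsA⟩ := measurableSet_comap_membership (fun k : Fin n ↦ A k) ⟨k, hk⟩
    obtain ⟨t, ht, htB⟩ := measurableSet_comap_membership (fun k : Fin n ↦ B k) ⟨l, hl⟩
    exact ⟨s ×ˢ t, hs.prod ht, congrArg₂ (· ×ˢ ·) hsA htB⟩
  obtain ⟨n, c, hc, hcV⟩ := exists_forall_smul_map_le_imp_mem (hA.prod hB)
    (fun n ↦ (ha n).prodMap (hb n)) hrect hV
  filter_upwards [eventually_exists_marginals_eq_and_smul_map_le π (ha n) (hb n)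
    (null_frontier_preimage_membership_singleton fun k ↦ hA₀ k)
    (null_frontier_preimage_membership_singleton fun k ↦ hB₀ k) hc] with p hp
  obtain ⟨π', hπ', hle⟩ := hp
  exact hπ' ▸ hcV π' hle

end Marginals

section Couplings

variable [MetricSpace X] [MeasurableSpace X] [MetricSpace Y] [MeasurableSpace Y]

lemma couplings_nonempty (μ : ProbabilityMeasure X) (ν : ProbabilityMeasure Y) :
    (couplings μ ν).Nonempty :=
  ⟨μ.prod ν, by simp [couplings]⟩

lemma exists_mem_couplings_eq_smul_add_smul {μ : ProbabilityMeasure X} {ν : ProbabilityMeasure Y}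
    {π₁ π₂ : ProbabilityMeasure (X × Y)} (h₁ : π₁ ∈ couplings μ ν) (h₂ : π₂ ∈ couplings μ ν)
    {s t : ℝ≥0∞} (hst : s + t = 1) :
    ∃ π ∈ couplings μ ν, π.toMeasure = s • π₁.toMeasure + t • π₂.toMeasure := by
  have : IsProbabilityMeasure (s • π₁.toMeasure + t • π₂.toMeasure) := ⟨by simp [hst]⟩
  refine ⟨⟨_, this⟩, ⟨?_, ?_⟩, rfl⟩
  · rw [ProbabilityMeasure.coe_mk, Measure.map_add _ _ measurable_fst, Measure.map_smul,
      Measure.map_smul, h₁.1, h₂.1, ← add_smul, hst, one_smul]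
  · rw [ProbabilityMeasure.coe_mk, Measure.map_add _ _ measurable_snd, Measure.map_smul,
      Measure.map_smul, h₁.2, h₂.2, ← add_smul, hst, one_smul]

end Couplings

theorem couplings_correspondence_continuous_general
    [MetricSpace X] [PolishSpace X] [MeasurableSpace X] [BorelSpace X]
    [MetricSpace Y] [PolishSpace Y] [MeasurableSpace Y] [BorelSpace Y] :
    ∀ (μ : ProbabilityMeasure X) (ν : ProbabilityMeasure Y),
      (couplings μ ν).Nonempty ∧
      (∀ π₁ ∈ couplings μ ν, ∀ π₂ ∈ couplings μ ν, ∀ t : ℝ≥0∞, t ≤ 1 →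
        ∃ π ∈ couplings μ ν, π.toMeasure = t • π₁.toMeasure + (1 - t) • π₂.toMeasure) ∧
      IsCompact (couplings μ ν) ∧
      (∀ U : Set (ProbabilityMeasure (X × Y)), IsOpen U → couplings μ ν ⊆ U →
        ∃ V ∈ nhds (μ, ν), ∀ p : ProbabilityMeasure X × ProbabilityMeasure Y,
          p ∈ V → couplings p.1 p.2 ⊆ U) ∧
      (∀ U : Set (ProbabilityMeasure (X × Y)), IsOpen U → (couplings μ ν ∩ U).Nonempty →
        ∃ V ∈ nhds (μ, ν), ∀ p : ProbabilityMeasure X × ProbabilityMeasure Y,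
          p ∈ V → (couplings p.1 p.2 ∩ U).Nonempty) := by
  intro μ ν
  refine ⟨couplings_nonempty μ ν, fun π₁ h₁ π₂ h₂ t ht ↦
    exists_mem_couplings_eq_smul_add_smul h₁ h₂ (add_tsub_cancel_of_le ht), ?_, ?_, ?_⟩
  · rw [couplings_eq_preimage_marginals]
    exact isProperMap_marginals.isCompact_preimage isCompact_singleton
  · intro U hU hsub
    simp only [couplings_eq_preimage_marginals] at hsub ⊢
    exact ⟨_, isProperMap_marginals.isClosedMap.eventually_nhds_fiber (μ, ν)
      fun π hπ ↦ hU.mem_nhds (hsub hπ), fun p hp ↦ hp⟩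
  · rintro U hU ⟨π, hπ, hπU⟩
    simp only [couplings_eq_preimage_marginals] at hπ ⊢
    have himage : marginals '' U ∈ 𝓝 (marginals π) :=
      isOpenMap_marginals.image_mem_nhds (hU.mem_nhds hπU)
    refine ⟨marginals '' U, (show marginals π = (μ, ν) from hπ) ▸ himage, ?_⟩
    rintro _ ⟨π', hπ', rfl⟩
    exact ⟨π', rfl, hπ'⟩

/-- Continuity of the coupling correspondence `(μ,ν) ↦ Π(μ,ν)`: it is upper and lower
hemicontinuous for the weak topologies, with nonempty, convex, compact values. -/
theorem couplings_correspondence_continuous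
    [MetricSpace X] [CompleteSpace X] [SecondCountableTopology X]
    [MeasurableSpace X] [BorelSpace X]
    [MetricSpace Y] [CompleteSpace Y] [SecondCountableTopology Y]
    [MeasurableSpace Y] [BorelSpace Y] :
    ∀ (μ : ProbabilityMeasure X) (ν : ProbabilityMeasure Y),
      -- nonempty values
      (couplings μ ν).Nonempty ∧
      -- convex values
      (∀ π₁ ∈ couplings μ ν, ∀ π₂ ∈ couplings μ ν, ∀ t : ℝ≥0∞, t ≤ 1 →
        ∃ π ∈ couplings μ ν, π.toMeasure = t • π₁.toMeasure + (1 - t) • π₂.toMeasure) ∧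
      -- compact values
      IsCompact (couplings μ ν) ∧
      -- upper hemicontinuity
      (∀ U : Set (ProbabilityMeasure (X × Y)), IsOpen U → couplings μ ν ⊆ U →
        ∃ V ∈ nhds (μ, ν), ∀ p : ProbabilityMeasure X × ProbabilityMeasure Y,
          p ∈ V → couplings p.1 p.2 ⊆ U) ∧
      -- lower hemicontinuity
      (∀ U : Set (ProbabilityMeasure (X × Y)), IsOpen U → (couplings μ ν ∩ U).Nonempty →
        ∃ V ∈ nhds (μ, ν), ∀ p : ProbabilityMeasure X × ProbabilityMeasure Y,
          p ∈ V → (couplings p.1 p.2 ∩ U).Nonempty) :=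
  couplings_correspondence_continuous_general
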